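/- For every odd x ∈ {1,…,2^n−3}, applying the canonical phases with respect to x, in the listed order, to the canonical policy π_x yields the canonical policy π_{x+1}. -/

import Mathlib

/-! ## The Markov decision process `𝔅_n` -/

/-- Vertices of the MDP `𝔅_n`: a transportation vertex `t`, a sink `s`, a dummy vertex `d`,
and vertices `a i`, `b i` for `i ∈ {1,…,n}`. -/
inductive BV : Type where
  | t : BV
  | s : BV
  | d : BV
  | a : ℕ → BV
  | b : ℕ → BV
deriving DecidableEq

/-- The vertex `a i` for `i ∈ {1,…,n+1}`, with the convention `a (n+1) = s`. -/
def aN (n i : ℕ) : BV := if i = n + 1 then BV.s else BV.a i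

/-- The vertex `b i` for `i ∈ {1,…,n+1}`, with the convention `b (n+1) = d`. -/
def bN (n i : ℕ) : BV := if i = n + 1 then BV.d else BV.b i

/-- The vertex set of `𝔅_n`. -/
def IsBVertex (n : ℕ) : BV → Prop
  | BV.t => True
  | BV.s => True
  | BV.d => True
  | BV.a i => 1 ≤ i ∧ i ≤ n
  | BV.b i => 1 ≤ i ∧ i ≤ n

/-- The edge relation of `𝔅_n`: travel, enter, skip, board, stay, leave edges,
the edge `(d,s)` and the self-loop `(s,s)`. -/
def BEdge (n : ℕ) (u v : BV) : Prop :=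
  (∃ i, 1 ≤ i ∧ i ≤ n ∧ u = BV.t ∧ v = BV.a i) ∨
  (∃ i, 1 ≤ i ∧ i ≤ n ∧ u = BV.a i ∧ v = BV.b i) ∨
  (∃ i, 1 ≤ i ∧ i ≤ n ∧ u = BV.a i ∧ v = aN n (i + 1)) ∨
  (∃ i, 1 ≤ i ∧ i ≤ n ∧ u = BV.a i ∧ v = BV.t) ∨
  (∃ i, 1 ≤ i ∧ i ≤ n ∧ u = BV.b i ∧ v = bN n (i + 1)) ∨
  (∃ i, 1 ≤ i ∧ i ≤ n ∧ u = BV.b i ∧ v = aN n (i + 1)) ∨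
  (u = BV.d ∧ v = BV.s) ∨ (u = BV.s ∧ v = BV.s)

/-- The reward function of `𝔅_n`: `r(enter i) = 2^i`, `r(stay i) = 3/4`,
`r(board i) = -2^i + 5/4`, and reward `0` on all other edges. -/
def rB (n : ℕ) (u v : BV) : ℚ :=
  match u, v with
  | BV.a i, BV.b j => if i = j then 2 ^ i else 0
  | BV.a i, BV.t => -(2 ^ i) + 5 / 4
  | BV.b i, BV.b j => if j = i + 1 then 3 / 4 else 0
  | BV.b i, BV.d => if i = n then 3 / 4 else 0
  | _, _ => 0

/-- A policy for `𝔅_n` chooses an outgoing edge at every vertex. -/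
def IsBPolicy (n : ℕ) (π : BV → BV) : Prop := ∀ u, IsBVertex n u → BEdge n u (π u)

/-- A policy is weak unichain if it reaches the sink `s` from every vertex. -/
def BWeakUnichain (n : ℕ) (π : BV → BV) : Prop :=
  ∀ u, IsBVertex n u → ∃ k, π^[k] u = BV.s

open Classical in
/-- The value of a vertex `v` w.r.t. a (weak unichain) policy `π`:
the sum of the rewards along the path that `π` takes from `v` to the sink `s`. -/
noncomputable def BVal (n : ℕ) (π : BV → BV) (v : BV) : ℚ :=
  if h : ∃ k, π^[k] v = BV.s then
    ∑ i ∈ Finset.range (Nat.find h), rB n (π^[i] v) (π^[i + 1] v)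
  else 0

/-- The reduced costs of the edge `(u,v)` w.r.t. the policy `π`. -/
noncomputable def zB (n : ℕ) (π : BV → BV) (u v : BV) : ℚ :=
  rB n u v + BVal n π v - BVal n π u

/-- The edge `(u,v)` is an improving switch for `π` if its reduced costs are positive. -/
def BImproving (n : ℕ) (π : BV → BV) (u v : BV) : Prop :=
  BEdge n u v ∧ 0 < zB n π u v

/-- The Bland numbering `𝒩_{𝔅_n}` of the edges of `𝔅_n`. -/
def NB (n : ℕ) (u v : BV) : ℕ :=
  match u, v with
  | BV.t, BV.a i => i
  | BV.a i, BV.b _ => n + 1 + 5 * (i - 1)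
  | BV.a i, BV.a _ => n + 2 + 5 * (i - 1)
  | BV.a i, BV.s => n + 2 + 5 * (i - 1)
  | BV.a i, BV.t => n + 3 + 5 * (i - 1)
  | BV.b i, BV.b _ => n + 4 + 5 * (i - 1)
  | BV.b i, BV.d => n + 4 + 5 * (i - 1)
  | BV.b i, BV.a _ => n + 5 + 5 * (i - 1)
  | BV.b i, BV.s => n + 5 + 5 * (i - 1)
  | BV.d, BV.s => 6 * n + 1
  | BV.s, BV.s => 6 * n + 2
  | _, _ => 0

/-- One step of Bland's policy iteration with edge numbering `N`:
apply the improving switch with the smallest number. -/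
def IsBlandStep (n : ℕ) (N : BV → BV → ℕ) (π π' : BV → BV) : Prop :=
  ∃ u v, BImproving n π u v ∧ (∀ u' v', BImproving n π u' v' → N u v ≤ N u' v') ∧
    π' = Function.update π u v

/-- `BlandReaches n N π ψ` says that Bland's policy iteration started at `π` visits `ψ`. -/
def BlandReaches (n : ℕ) (N : BV → BV → ℕ) : (BV → BV) → (BV → BV) → Prop :=
  Relation.ReflTransGen (IsBlandStep n N)

/-- The canonical policy `π_0` for `0`: `travel 1`, `skip i` and `leave i` are active. -/
def pi0 (n : ℕ) : BV → BV := fun u =>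
  match u with
  | BV.t => BV.a 1
  | BV.a i => aN n (i + 1)
  | BV.b i => aN n (i + 1)
  | BV.d => BV.s
  | BV.s => BV.s

/-- The optimal policy `π_*`: `travel 1`, `enter i` for all `i`, `leave j` for `j < n`,
and `stay n` are active. -/
def piStar (n : ℕ) : BV → BV := fun u =>
  match u with
  | BV.t => BV.a 1
  | BV.a i => BV.b i
  | BV.b i => if i = n then BV.d else BV.a (i + 1)
  | BV.d => BV.s
  | BV.s => BV.s

/-! ## Bits and canonical policies -/

/-- The least significant set bit `ℓ_1(x)` (1-based). -/
noncomputable def lsb (x : ℕ) : ℕ := sInf {i | 1 ≤ i ∧ Nat.testBit x (i - 1)}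

/-- The most significant set bit `m(x)` (1-based). -/
noncomputable def msb1 (x : ℕ) : ℕ := sSup {i | 1 ≤ i ∧ Nat.testBit x (i - 1)}

/-- The least unset bit `ℓ_0(x)` (1-based). -/
noncomputable def lzero (x : ℕ) : ℕ := sInf {i | 1 ≤ i ∧ ¬ Nat.testBit x (i - 1)}

/-- `L_i(x) = max { j ≤ i-2 | x_j = 1 or j = 1 }` (1-based bits). -/
noncomputable def Lfun (i x : ℕ) : ℕ :=
  sSup {j | 1 ≤ j ∧ j ≤ i - 2 ∧ (Nat.testBit x (j - 1) ∨ j = 1)}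

/-- `IsCanonical n x π` says that `π` is the canonical policy `π_x` for `x`. -/
noncomputable def IsCanonical (n x : ℕ) (π : BV → BV) : Prop :=
  IsBPolicy n π ∧
  if x = 0 then
    π BV.t = BV.a 1 ∧
      ∀ i, 1 ≤ i → i ≤ n → π (BV.a i) = aN n (i + 1) ∧ π (BV.b i) = aN n (i + 1)
  else
    π BV.t = BV.a (lsb x) ∧
    π (BV.b (msb1 x)) = aN n (msb1 x + 1) ∧
    (∀ i, msb1 x < i → i ≤ n → π (BV.a i) = aN n (i + 1) ∧ π (BV.b i) = aN n (i + 1)) ∧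
    ∀ i, 1 ≤ i → i ≤ n → Nat.testBit x (i - 1) →
      π (BV.a i) = BV.b i ∧
      (i = 2 → π (BV.b 1) = BV.a 2 ∧ (¬ Nat.testBit x 0 → π (BV.a 1) = BV.a 2)) ∧
      (3 ≤ i → Nat.testBit x (i - 2) → π (BV.b (i - 1)) = BV.a i) ∧
      (3 ≤ i → ¬ Nat.testBit x (i - 2) →
        π (BV.b (i - 1)) = BV.b i ∧ π (BV.a (i - 1)) = BV.a i ∧
        π (BV.b (i - 2)) = BV.a (i - 1) ∧
        (Lfun i x < i - 2 →
          ∀ j, Lfun i x + 1 ≤ j → j ≤ i - 2 →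
            π (BV.a j) = BV.t ∧ π (BV.b (j - 1)) = BV.b j) ∧
        (Lfun i x = 1 → ¬ Nat.testBit x 0 → π (BV.a 1) = BV.t))

/-- Activating a list of edges in a policy, from left to right. -/
def activateList (π : BV → BV) (L : List (BV × BV)) : BV → BV :=
  L.foldl (fun σ e => Function.update σ e.1 e.2) π

/-- The canonical phases w.r.t. an odd number `x` (with `ℓ := ℓ_0(x)`), as a list of edges
to be activated in order. -/
noncomputable def phaseList (n x : ℕ) : List (BV × BV) :=
  let ℓ := lzero x
  (if Nat.testBit x ℓ then [(BV.b ℓ, aN n (ℓ + 1))] else []) ++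
  (if Nat.testBit x ℓ ∨ msb1 x < ℓ then [(BV.b (ℓ - 1), BV.b ℓ)] else []) ++
  [(BV.a ℓ, BV.b ℓ), (BV.t, BV.a ℓ)] ++
  ((List.range (ℓ - 2)).map fun j => (BV.a (j + 1), BV.t)) ++
  [(BV.a (ℓ - 1), BV.a ℓ)] ++
  (((List.range (ℓ - 3)).reverse).map fun j => (BV.b (j + 1), BV.b (j + 2))) ++
  (if ℓ = 2 then [(BV.b 1, BV.a 2)] else [])

/-! ## The Markov decision process `𝔇_n` -/

/-- Vertices of `𝔇_n`: the original vertices (`base`), and for every edge `(v,w)` of `𝔅_n`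
other than the self-loop, the gadget vertices `x v w`, `y v w`, `z v w`. -/
inductive DV : Type where
  | base : BV → DV
  | x : BV → BV → DV
  | y : BV → BV → DV
  | z : BV → BV → DV
deriving DecidableEq

/-- The edges of `𝔅_n` that get replaced by gadgets (all edges except the self-loop `(s,s)`). -/
def DEdgePair (n : ℕ) (v w : BV) : Prop := BEdge n v w ∧ v ≠ BV.s

/-- The vertex set of `𝔇_n`. -/
def IsDVertex (n : ℕ) : DV → Prop
  | DV.base v => IsBVertex n v
  | DV.x v w => DEdgePair n v w
  | DV.y v w => DEdgePair n v w
  | DV.z v w => DEdgePair n v w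

/-- The agent vertices of `𝔇_n` (all vertices except the randomization vertices `y v w`). -/
def IsDAgent (n : ℕ) : DV → Prop
  | DV.base v => IsBVertex n v
  | DV.x v w => DEdgePair n v w
  | DV.y _ _ => False
  | DV.z v w => DEdgePair n v w

/-- The agent edges of `𝔇_n`. -/
def DEdge (n : ℕ) (u u' : DV) : Prop :=
  (∃ v w, DEdgePair n v w ∧
    ((u = DV.base v ∧ u' = DV.x v w) ∨ (u = DV.x v w ∧ u' = DV.base v) ∨
     (u = DV.x v w ∧ u' = DV.y v w) ∨ (u = DV.z v w ∧ u' = DV.base w))) ∨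
  (u = DV.base BV.s ∧ u' = DV.base BV.s)

/-- The reward function of `𝔇_n`: the edge `(z v w, w)` carries the reward of the original
edge `(v,w)`; all other agent edges have reward `0`. -/
def rD (n : ℕ) (u u' : DV) : ℚ :=
  match u, u' with
  | DV.z v w, DV.base w' => if w' = w then rB n v w else 0
  | _, _ => 0

/-- A policy for `𝔇_n` chooses an outgoing agent edge at every agent vertex. -/
def IsDPolicy (n : ℕ) (π : DV → DV) : Prop := ∀ u, IsDAgent n u → DEdge n u (π u)

/-- `IsDVal n p π V` says that `V` satisfies the Bellman equations characterizing the value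
function of the policy `π` for `𝔇_n` with probabilities `p`, with `V s = 0`. -/
def IsDVal (n : ℕ) (p : BV → ℚ) (π : DV → DV) (V : DV → ℚ) : Prop :=
  V (DV.base BV.s) = 0 ∧
  (∀ u, IsDAgent n u → V u = rD n u (π u) + V (π u)) ∧
  (∀ v w, DEdgePair n v w →
    V (DV.y v w) = p v * V (DV.z v w) + (1 - p v) * V (DV.base v))

open Classical in
/-- The value function of a (weak unichain) policy `π` for `𝔇_n`: the unique solution of the
Bellman equations (normalized to `0` outside the vertex set). -/
noncomputable def DVal (n : ℕ) (p : BV → ℚ) (π : DV → DV) : DV → ℚ :=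
  if h : ∃! V : DV → ℚ, IsDVal n p π V ∧ ∀ u, ¬ IsDVertex n u → V u = 0 then
    h.exists.choose
  else fun _ => 0

/-- The reduced costs of an agent edge `(u,u')` of `𝔇_n` w.r.t. the policy `π`. -/
noncomputable def zD (n : ℕ) (p : BV → ℚ) (π : DV → DV) (u u' : DV) : ℚ :=
  rD n u u' + DVal n p π u' - DVal n p π u

/-- An agent edge of `𝔇_n` is an improving switch if its reduced costs are positive. -/
def DImproving (n : ℕ) (p : BV → ℚ) (π : DV → DV) (u u' : DV) : Prop :=
  DEdge n u u' ∧ 0 < zD n p π u u'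

/-- One (agent or positive-probability randomization) step of the process `𝔇_n` under `π`. -/
def DStep (n : ℕ) (p : BV → ℚ) (π : DV → DV) (u u' : DV) : Prop :=
  (IsDAgent n u ∧ u' = π u) ∨
  (∃ v w, DEdgePair n v w ∧ u = DV.y v w ∧
    ((u' = DV.z v w ∧ 0 < p v) ∨ (u' = DV.base v ∧ 0 < 1 - p v)))

/-- A policy for `𝔇_n` is weak unichain if it reaches `s` with probability one from every
vertex, i.e. `s` is reachable via active/positive-probability steps from every vertex. -/
def DWeakUnichain (n : ℕ) (p : BV → ℚ) (π : DV → DV) : Prop :=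
  ∀ u, IsDVertex n u → Relation.ReflTransGen (DStep n p π) u (DV.base BV.s)

/-- The twin policy of a policy `π` for `𝔅_n`: every vertex `v ≠ s` is `π v`-oriented. -/
def twin (π : BV → BV) : DV → DV := fun u =>
  match u with
  | DV.base v => if v = BV.s then DV.base BV.s else DV.x v (π v)
  | DV.x v w => if w = π v then DV.y v w else DV.base v
  | DV.y v w => DV.y v w
  | DV.z _ w => DV.base w

/-- The vertex numbering `𝒩_V` of `𝔅_n`: the order `(t, a 1, b 1, a 2, b 2, …, a n, b n, d, s)`. -/
def NV (n : ℕ) : BV → ℕ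
  | BV.t => 1
  | BV.a i => 2 * i
  | BV.b i => 2 * i + 1
  | BV.d => 2 * n + 2
  | BV.s => 2 * n + 3

/-- The specific probabilities `p_v = 2^{-𝒩_V(v)·(n+5)}`. -/
noncomputable def pSpec (n : ℕ) (v : BV) : ℚ := (2 : ℚ) ^ (-((NV n v * (n + 5) : ℕ) : ℤ))

/-- The set `B(v)` of agent edges of `𝔇_n` belonging to the vertex `v`. -/
def Belongs (n : ℕ) (v : BV) (e : DV × DV) : Prop :=
  ∃ w, DEdgePair n v w ∧
    (e = (DV.x v w, DV.y v w) ∨ e = (DV.base v, DV.x v w) ∨ e = (DV.x v w, DV.base v))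

/-- Applying the improving switch `e` to the policy `π` yields `π'`. -/
def DApply (n : ℕ) (p : BV → ℚ) (π : DV → DV) (e : DV × DV) (π' : DV → DV) : Prop :=
  DImproving n p π e.1 e.2 ∧ π' = Function.update π e.1 e.2

/-- One step of Bland's policy iteration on `𝔇_n` with edge numbering `N`. -/
def IsBlandStepD (n : ℕ) (p : BV → ℚ) (N : DV → DV → ℕ) (π π' : DV → DV) : Prop :=
  ∃ u u', DImproving n p π u u' ∧ (∀ a b, DImproving n p π a b → N u u' ≤ N a b) ∧
    π' = Function.update π u u'

/-- One step of Dantzig's policy iteration on `𝔇_n`: apply an improving switch of maximal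
reduced costs. -/
def DantzigStep (n : ℕ) (p : BV → ℚ) (π π' : DV → DV) : Prop :=
  ∃ u u', DImproving n p π u u' ∧
    (∀ a b, DImproving n p π a b → zD n p π a b ≤ zD n p π u u') ∧
    π' = Function.update π u u'

/-- The finite set of vertices of `𝔅_n`, as a `Finset`. -/
noncomputable def BVSet (n : ℕ) : Finset BV :=
  {BV.t, BV.d, BV.s} ∪ (Finset.Icc 1 n).image BV.a ∪ (Finset.Icc 1 n).image BV.b

/-- The finite set of agent vertices of `𝔇_n`, as a `Finset`. -/
noncomputable def DAgentSet (n : ℕ) : Finset DV := by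
  classical
  exact ((BVSet n).image DV.base) ∪
    (((BVSet n ×ˢ BVSet n).filter fun e => DEdgePair n e.1 e.2).image fun e => DV.x e.1 e.2) ∪
    (((BVSet n ×ˢ BVSet n).filter fun e => DEdgePair n e.1 e.2).image fun e => DV.z e.1 e.2)

/-- The objective of the Largest Increase rule: the sum of the values of all agent vertices. -/
noncomputable def LIobj (n : ℕ) (p : BV → ℚ) (π : DV → DV) : ℚ :=
  ∑ u ∈ DAgentSet n, DVal n p π u

/-- One step of the Largest Increase policy iteration on `𝔇_n`: apply an improving switch
maximizing the sum of all agent vertex values of the resulting policy. -/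
def LIStep (n : ℕ) (p : BV → ℚ) (π π' : DV → DV) : Prop :=
  ∃ u u', DImproving n p π u u' ∧
    (∀ a b, DImproving n p π a b →
      LIobj n p (Function.update π a b) ≤ LIobj n p (Function.update π u u')) ∧
    π' = Function.update π u u'

/-- `N` is a Bland numbering `𝒩_{𝔇_n}` for `𝔇_n`: it is injective on agent edges, the edges
`(x v w, v)` all come first, within each gadget `(x v w, y v w)` precedes `(v, x v w)`,
the gadget blocks are ordered according to `𝒩_{𝔅_n}`, and the self-loop comes last. -/
def IsDBlandNumbering (n : ℕ) (N : DV → DV → ℕ) : Prop :=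
  (∀ u₁ u₂ u₁' u₂', DEdge n u₁ u₂ → DEdge n u₁' u₂' → N u₁ u₂ = N u₁' u₂' →
    u₁ = u₁' ∧ u₂ = u₂') ∧
  (∀ v w v' w', DEdgePair n v w → DEdgePair n v' w' →
    N (DV.x v w) (DV.base v) < N (DV.x v' w') (DV.y v' w')) ∧
  (∀ v w, DEdgePair n v w → N (DV.x v w) (DV.y v w) < N (DV.base v) (DV.x v w)) ∧
  (∀ v w v' w', DEdgePair n v w → DEdgePair n v' w' → NB n v w < NB n v' w' →
    N (DV.base v) (DV.x v w) < N (DV.x v' w') (DV.y v' w')) ∧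
  (∀ v w, DEdgePair n v w → N (DV.base v) (DV.x v w) < N (DV.base BV.s) (DV.base BV.s))

theorem al_append (π : BV → BV) (L M : List (BV × BV)) :
    activateList π (L ++ M) = activateList (activateList π L) M := by
  simp [activateList, List.foldl_append]

theorem al_nil (π : BV → BV) : activateList π [] = π := rfl

theorem al_cons (π : BV → BV) (e : BV × BV) (L : List (BV × BV)) :
    activateList π (e :: L) = activateList (Function.update π e.1 e.2) L := rfl

theorem al_board (π : BV → BV) (k : ℕ) (u : BV) :
    activateList π ((List.range k).map fun j => (BV.a (j + 1), BV.t)) u =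
      match u with
      | BV.a j => if 1 ≤ j ∧ j ≤ k then BV.t else π (BV.a j)
      | v => π v := by
  induction k with
  | zero => cases u <;> simp [al_nil]; intros; omega
  | succ k ih =>
    rw [List.range_succ, List.map_append, al_append]
    simp only [List.map_cons, List.map_nil, al_cons, al_nil, Function.update_apply, ih]
    cases u <;> simp
    grind

theorem al_stay (π : BV → BV) (k : ℕ) (u : BV) :
    activateList π (((List.range k).reverse).map fun j => (BV.b (j + 1), BV.b (j + 2))) u =
      match u with
      | BV.b j => if 1 ≤ j ∧ j ≤ k then BV.b (j + 1) else π (BV.b j)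
      | v => π v := by
  induction k generalizing π with
  | zero => cases u <;> simp [al_nil]; intros; omega
  | succ k ih =>
    rw [List.range_succ, List.reverse_append]
    simp only [List.reverse_cons, List.reverse_nil, List.nil_append, List.cons_append,
      List.map_cons, al_cons, ih]
    cases u <;> simp [Function.update_apply]
    grind

theorem bits_succ (k x : ℕ) (h1 : ∀ i < k, x.testBit i = true) (h2 : x.testBit k = false) (i : ℕ) :
    (x + 1).testBit i = if i < k then false else if i = k then true else x.testBit i := by
  induction k generalizing x i with
  | zero =>
    have hx : x % 2 = 0 := by simpa [Nat.testBit_zero] using h2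
    cases i with
    | zero => simp [Nat.testBit_zero]; omega
    | succ i =>
      simp only [Nat.testBit_succ]
      have : (x + 1) / 2 = x / 2 := by omega
      simp [this]
  | succ k ih =>
    have hx : x % 2 = 1 := by simpa [Nat.testBit_zero] using h1 0 (by omega)
    have h3 := ih (x / 2) (fun i hi => by rw [← Nat.testBit_succ]; exact h1 _ (by omega))
      (by rw [← Nat.testBit_succ]; exact h2)
    cases i with
    | zero => simp [Nat.testBit_zero]; omega
    | succ i =>
      simp only [Nat.testBit_succ]
      have : (x + 1) / 2 = x / 2 + 1 := by omega
      rw [this, h3]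
      simp

theorem lzero_spec (n x : ℕ) (hodd : Odd x) (hx1 : 1 ≤ x) (hx : x ≤ 2 ^ n - 3) :
    2 ≤ lzero x ∧ lzero x ≤ n ∧ x.testBit (lzero x - 1) = false ∧
      ∀ i, i < lzero x - 1 → x.testBit i = true := by
  have hex : ∃ i, i < n ∧ x.testBit i = false := by
    by_contra! hc
    have : x = 2 ^ n - 1 := by
      apply Nat.eq_of_testBit_eq
      intro i
      rw [Nat.testBit_two_pow_sub_one]
      by_cases hi : i < n
      · simpa [hi] using hc i hi
      · simp only [hi, decide_false]
        apply Nat.testBit_eq_false_of_lt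
        calc x < 2 ^ n := by omega
          _ ≤ 2 ^ i := Nat.pow_le_pow_right (by norm_num) (by omega)
    omega
  obtain ⟨i0, hi0, hb0⟩ := hex
  have hmem : lzero x ∈ {i | 1 ≤ i ∧ ¬ Nat.testBit x (i - 1)} :=
    Nat.sInf_mem ⟨i0 + 1, by simp [hb0]⟩
  have hle : lzero x ≤ i0 + 1 := Nat.sInf_le (by simp [hb0])
  have h0 : x.testBit 0 = true := by
    rw [Nat.testBit_zero]; simpa using Nat.odd_iff.mp hodd
  obtain ⟨ha, hb⟩ := hmem
  refine ⟨?_, by omega, by simpa using hb, ?_⟩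
  · by_contra hc
    have : lzero x = 1 := by omega
    rw [this] at hb
    simp [h0] at hb
  · intro i hi
    by_contra hc
    have : lzero x ≤ i + 1 := Nat.sInf_le (by simpa using hc)
    omega

theorem msb_of (x m : ℕ) (hm : 1 ≤ m) (h : x.testBit (m - 1) = true)
    (h2 : ∀ i, m ≤ i → x.testBit i = false) : msb1 x = m := by
  apply IsGreatest.csSup_eq
  refine ⟨⟨hm, h⟩, ?_⟩
  rintro i ⟨hi, hb⟩
  by_contra hc
  rw [h2 (i - 1) (by omega)] at hb
  simp at hb

theorem msb_spec (x n : ℕ) (hx1 : 1 ≤ x) (hx : x < 2 ^ n) :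
    1 ≤ msb1 x ∧ msb1 x ≤ n ∧ x.testBit (msb1 x - 1) = true ∧
      ∀ i, msb1 x ≤ i → x.testBit i = false := by
  have hbd : ∀ i ∈ {i | 1 ≤ i ∧ Nat.testBit x (i - 1)}, i ≤ n := by
    rintro i ⟨hi, hb⟩
    by_contra hc
    have := Nat.testBit_eq_false_of_lt (n := x) (i := i - 1)
      (lt_of_lt_of_le hx (Nat.pow_le_pow_right (by norm_num) (by omega)))
    simp [this] at hb
  have hne : {i | 1 ≤ i ∧ Nat.testBit x (i - 1)}.Nonempty := by
    obtain ⟨i, hi⟩ := Nat.exists_testBit_of_ne_zero (show x ≠ 0 by omega)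
    exact ⟨i + 1, by simp [hi]⟩
  have hb : BddAbove {i | 1 ≤ i ∧ Nat.testBit x (i - 1)} := ⟨n, hbd⟩
  have hmem := Nat.sSup_mem hne hb
  refine ⟨hmem.1, hbd _ hmem, hmem.2, ?_⟩
  intro i hi
  by_contra hc
  have : i + 1 ≤ msb1 x := le_csSup hb (by simpa using hc)
  omega

/-- `L_i(x) < j` iff `j ≥ 2` and all bits from `j` to `i-2` vanish. -/
theorem Lfun_lt (i x j : ℕ) (hi : 3 ≤ i) :
    Lfun i x + 1 ≤ j ↔ 2 ≤ j ∧ ∀ k, j ≤ k → k ≤ i - 2 → x.testBit (k - 1) = false := by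
  have hb : BddAbove {j | 1 ≤ j ∧ j ≤ i - 2 ∧ (Nat.testBit x (j - 1) ∨ j = 1)} :=
    ⟨i - 2, fun j hj => hj.2.1⟩
  have hne : {j | 1 ≤ j ∧ j ≤ i - 2 ∧ (Nat.testBit x (j - 1) ∨ j = 1)}.Nonempty :=
    ⟨1, by refine ⟨?_, ?_, ?_⟩ <;> omega⟩
  have hmem := Nat.sSup_mem hne hb
  have hup : ∀ k, 1 ≤ k → k ≤ i - 2 → (Nat.testBit x (k - 1) ∨ k = 1) → k ≤ Lfun i x :=
    fun k h1 h2 h3 => le_csSup hb ⟨h1, h2, h3⟩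
  change 1 ≤ Lfun i x ∧ Lfun i x ≤ i - 2 ∧ (Nat.testBit x (Lfun i x - 1) ∨ Lfun i x = 1) at hmem
  obtain ⟨h1, h2, h3⟩ := hmem
  constructor
  · intro h
    refine ⟨by omega, fun k hk hk2 => ?_⟩
    by_contra hc
    have := hup k (by omega) hk2 (Or.inl (by simpa using hc))
    omega
  · rintro ⟨h4, h5⟩
    by_contra hc
    rcases h3 with h3 | h3
    · rw [h5 _ (by omega) h2] at h3
      simp at h3
    · omega

set_option maxHeartbeats 4000000 in
theorem stmt5 (n : ℕ) (hn : 1 ≤ n) (x : ℕ) (hx1 : 1 ≤ x) (hx : x ≤ 2 ^ n - 3) (hodd : Odd x)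
    (π : BV → BV) (hπ : IsCanonical n x π) :
    IsCanonical n (x + 1) (activateList π (phaseList n x)) := by
  obtain ⟨hl2, hln, hl0, hlow⟩ := lzero_spec n x hodd hx1 hx
  obtain ⟨hm1, hmn, hmb, hmh⟩ := msb_spec x n hx1 (by omega)
  have hbits := bits_succ (lzero x - 1) x hlow hl0
  obtain ⟨σ, hσ⟩ : ∃ σ, σ = activateList π (phaseList n x) := ⟨_, rfl⟩
  have ht : σ BV.t = BV.a (lzero x) := by
    rw [hσ]
    simp only [phaseList, al_append]
    split_ifs <;> simp [-List.map_reverse, al_cons, al_nil, al_board, al_stay, Function.update_apply]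
  have hs : σ BV.s = π BV.s := by
    rw [hσ]
    simp only [phaseList, al_append]
    split_ifs <;> simp [-List.map_reverse, al_cons, al_nil, al_board, al_stay, Function.update_apply]
  have hd : σ BV.d = π BV.d := by
    rw [hσ]
    simp only [phaseList, al_append]
    split_ifs <;> simp [-List.map_reverse, al_cons, al_nil, al_board, al_stay, Function.update_apply]
  have ha : ∀ j, σ (BV.a j) = if j = lzero x then BV.b (lzero x) else
      if j = lzero x - 1 then BV.a (lzero x) else
      if 1 ≤ j ∧ j ≤ lzero x - 2 then BV.t else π (BV.a j) := by
    intro j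
    rw [hσ]
    simp only [phaseList, al_append]
    split_ifs <;> simp [-List.map_reverse, al_cons, al_nil, al_board, al_stay, Function.update_apply] <;> grind
  have hb : ∀ j, σ (BV.b j) = if lzero x = 2 ∧ j = 1 then BV.a 2 else
      if 1 ≤ j ∧ j ≤ lzero x - 3 then BV.b (j + 1) else
      if j = lzero x - 1 ∧ (x.testBit (lzero x) ∨ msb1 x < lzero x) then BV.b (lzero x) else
      if j = lzero x ∧ x.testBit (lzero x) then aN n (lzero x + 1) else π (BV.b j) := by
    intro j
    rw [hσ]
    simp only [phaseList, al_append]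
    split_ifs <;> simp [-List.map_reverse, al_cons, al_nil, al_board, al_stay, Function.update_apply] <;> grind
  rw [← hσ]
  clear hσ
  generalize lzero x = l at *
  generalize hmm : msb1 x = m at *
  obtain ⟨hpol, hcan⟩ := hπ
  rw [if_neg (by omega)] at hcan
  rw [hmm] at hcan
  obtain ⟨-, hcm, hch, hci⟩ := hcan
  have hlsb : lsb (x + 1) = l := by
    apply IsLeast.csInf_eq
    refine ⟨⟨by omega, by rw [hbits]; simp⟩, ?_⟩
    rintro i ⟨hi, hib⟩
    rw [hbits] at hib
    by_contra hc
    rw [if_pos (by omega)] at hib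
    simp at hib
  have hml : m ≠ l := by rintro rfl; simp [hl0] at hmb
  have hmsb : msb1 (x + 1) = max m l := by
    apply msb_of
    · omega
    · rw [hbits, if_neg (by omega)]
      rcases lt_or_gt_of_ne hml with h | h
      · rw [max_eq_right h.le, if_pos rfl]
      · rw [max_eq_left h.le, if_neg (by omega)]
        exact hmb
    · intro i hi
      rw [hbits, if_neg (by omega), if_neg (by omega)]
      exact hmh i (by omega)
  have ha_hi : ∀ j, l < j → σ (BV.a j) = π (BV.a j) := by
    intro j hj
    rw [ha, if_neg (by omega), if_neg (by omega), if_neg (by omega)]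
  have hb_hi : ∀ j, l < j → σ (BV.b j) = π (BV.b j) := by
    intro j hj
    rw [hb, if_neg (by omega), if_neg (by omega), if_neg (by omega), if_neg (by omega)]
  have ha_pre : σ (BV.a (l - 1)) = BV.a l := by
    rw [ha, if_neg (by omega), if_pos rfl]
  have ha_low : ∀ j, 1 ≤ j → j ≤ l - 2 → σ (BV.a j) = BV.t := by
    intro j h1 h2
    rw [ha, if_neg (by omega), if_neg (by omega), if_pos ⟨h1, h2⟩]
  have hb_low : ∀ j, 1 ≤ j → j ≤ l - 3 → σ (BV.b j) = BV.b (j + 1) := by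
    intro j h1 h2
    rw [hb, if_neg (by omega), if_pos ⟨h1, h2⟩]
  have hnz : x + 1 ≠ 0 := by omega
  refine ⟨?_, ?_⟩
  · intro u hu
    have hu' := hpol u hu
    cases u with
    | t => rw [ht]; exact Or.inl ⟨l, by omega, hln, rfl, rfl⟩
    | s => rw [hs]; exact hu'
    | d => rw [hd]; exact hu'
    | a j =>
      obtain ⟨hj1, hj2⟩ := hu
      rw [ha]
      split_ifs with h1 h2 h3
      · subst h1; exact Or.inr (Or.inl ⟨j, hj1, hj2, rfl, rfl⟩)
      · refine Or.inr (Or.inr (Or.inl ⟨j, hj1, hj2, rfl, ?_⟩))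
        rw [aN, if_neg (by omega)]; congr 1; omega
      · exact Or.inr (Or.inr (Or.inr (Or.inl ⟨j, hj1, hj2, rfl, rfl⟩)))
      · exact hu'
    | b j =>
      obtain ⟨hj1, hj2⟩ := hu
      rw [hb]
      split_ifs with h1 h2 h3 h4
      · refine Or.inr (Or.inr (Or.inr (Or.inr (Or.inr (Or.inl ⟨j, hj1, hj2, rfl, ?_⟩)))))
        rw [aN, if_neg (by omega)]; congr 1; omega
      · refine Or.inr (Or.inr (Or.inr (Or.inr (Or.inl ⟨j, hj1, hj2, rfl, ?_⟩))))
        rw [bN, if_neg (by omega)]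
      · refine Or.inr (Or.inr (Or.inr (Or.inr (Or.inl ⟨j, hj1, hj2, rfl, ?_⟩))))
        rw [bN, if_neg (by omega)]; congr 1; omega
      · refine Or.inr (Or.inr (Or.inr (Or.inr (Or.inr (Or.inl ⟨j, hj1, hj2, rfl, ?_⟩)))))
        rw [h4.1]
      · exact hu'
  rw [if_neg hnz, hlsb, hmsb]
  refine ⟨ht, ?_, ?_, ?_⟩
  · rcases lt_or_gt_of_ne hml with h | h
    · rw [max_eq_right h.le, hb, if_neg (by omega), if_neg (by omega), if_neg (by omega), if_neg]
      · exact (hch l h hln).2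
      · rw [hmh l h.le]; simp
    · rw [max_eq_left h.le, hb_hi m h]
      exact hcm
  · intro i hi hin
    have := hch i (by omega) hin
    rw [ha_hi i (by omega), hb_hi i (by omega)]
    exact this
  intro i hi1 hin hib
  have hil : l ≤ i := by
    by_contra hc
    rw [hbits, if_pos (by omega)] at hib
    simp at hib
  rcases Nat.eq_or_lt_of_le hil with rfl | hil
  · -- the newly set bit
    refine ⟨by rw [ha]; simp, ?_, ?_, ?_⟩
    · rintro rfl
      rw [hb, ha]
      simp
    · intro h3 hbt
      rw [hbits, if_pos (by omega)] at hbt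
      simp at hbt
    · intro h3 _
      have hstay : σ (BV.b (l - 1)) = BV.b l := by
        rw [hb, if_neg (by omega), if_neg (by omega)]
        by_cases hcond : x.testBit l = true ∨ m < l
        · rw [if_pos ⟨rfl, hcond⟩]
        · rw [if_neg (by tauto), if_neg (by omega)]
          push Not at hcond
          obtain ⟨hc1, hc2⟩ := hcond
          have hex : ∃ k, l < k ∧ x.testBit (k - 1) = true := ⟨m, by omega, hmb⟩
          classical
          have hk := Nat.find_spec hex
          have hkmin : ∀ q, q < Nat.find hex → ¬ (l < q ∧ x.testBit (q - 1) = true) :=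
            fun q hq => Nat.find_min hex hq
          generalize Nat.find hex = k at hk hkmin
          obtain ⟨hk1, hk2⟩ := hk
          have hkl : k ≠ l + 1 := by rintro rfl; simp at hk2; exact hc1 hk2
          have hkn : k ≤ n := by
            by_contra hc
            rw [hmh (k - 1) (by omega)] at hk2
            simp at hk2
          have hz : ∀ q, l ≤ q → q < k → x.testBit (q - 1) = false := by
            intro q hq1 hq2
            rcases Nat.eq_or_lt_of_le hq1 with rfl | hq1
            · exact hl0
            · have := hkmin q hq2
              simpa [hq1] using this
          have h4 := (hci k (by omega) hkn hk2).2.2.2 (by omega)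
            (by have := hz (k - 1) (by omega) (by omega)
                rw [show k - 1 - 1 = k - 2 by omega] at this
                simp [this])
          have hL : Lfun k x + 1 ≤ l :=
            (Lfun_lt k x l (by omega)).2 ⟨hl2, fun q h1 h2 => hz q h1 (by omega)⟩
          exact (h4.2.2.2.1 (by omega) l hL (by omega)).2
      refine ⟨hstay, ?_, ?_, ?_, ?_⟩
      · exact ha_pre
      · rw [hb, if_neg (by omega), if_neg (by omega), if_neg (by omega), if_neg (by omega)]
        have hbit := hlow (l - 2) (by omega)
        have hc := hci (l - 1) (by omega) (by omega)
          (by rw [show l - 1 - 1 = l - 2 by omega]; exact hbit)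
        by_cases hl3 : l = 3
        · subst hl3; exact (hc.2.1 rfl).1
        · have := hc.2.2.1 (by omega) (hlow _ (by omega))
          rw [show l - 1 - 1 = l - 2 by omega] at this
          exact this
      · intro _ j hj1 hj2
        have hj3 := ((Lfun_lt l (x + 1) j (by omega)).1 hj1).1
        refine ⟨ha_low j (by omega) hj2, ?_⟩
        rw [hb_low (j - 1) (by omega) (by omega)]
        congr 1; omega
      · intro _ _
        exact ha_low 1 le_rfl (by omega)
  · -- higher bits
    have hxb : x.testBit (i - 1) = true := by
      rw [hbits, if_neg (by omega), if_neg (by omega)] at hib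
      exact hib
    obtain ⟨c1, -, c3, c4⟩ := hci i hi1 hin hxb
    refine ⟨by rw [ha_hi i hil]; exact c1, fun h => by omega, ?_, ?_⟩
    · intro h3 hbt
      rcases Nat.eq_or_lt_of_le hil with h | h
      · have : i = l + 1 := by omega
        subst this
        have hxb' : x.testBit l = true := by simpa using hxb
        rw [show l + 1 - 1 = l by omega, hb, if_neg (by omega), if_neg (by omega),
          if_neg (by omega), if_pos ⟨rfl, hxb'⟩, aN, if_neg (by omega)]
      · rw [hbits, if_neg (by omega), if_neg (by omega)] at hbt
        rw [hb, if_neg (by omega), if_neg (by omega), if_neg (by omega), if_neg (by omega)]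
        exact c3 h3 hbt
    · intro h3 hbt
      have hil2 : l + 2 ≤ i := by
        by_contra hc
        rw [hbits, if_neg (by omega), if_pos (by omega)] at hbt
        simp at hbt
      rw [hbits, if_neg (by omega), if_neg (by omega)] at hbt
      obtain ⟨d1, d2, d3, d4, -⟩ := c4 h3 hbt
      refine ⟨?_, ?_, ?_, ?_, ?_⟩
      · rw [hb_hi _ (by omega)]; exact d1
      · rw [ha_hi _ (by omega)]; exact d2
      · rw [hb, if_neg (by omega), if_neg (by omega), if_neg (by omega), if_neg]
        · exact d3
        · rintro ⟨h, h'⟩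
          rw [h] at hbt; exact hbt h'
      · intro _ j hj1 hj2
        obtain ⟨e1, e2⟩ := (Lfun_lt i (x + 1) j h3).1 hj1
        have hjl : l < j := by
          by_contra hc
          have := e2 l (by omega) (by omega)
          rw [hbits] at this
          simp at this
        have e3 : ∀ k, j ≤ k → k ≤ i - 2 → x.testBit (k - 1) = false := by
          intro k hk1 hk2
          have := e2 k hk1 hk2
          rwa [hbits, if_neg (by omega), if_neg (by omega)] at this
        have hL := (Lfun_lt i x j h3).2 ⟨e1, e3⟩
        obtain ⟨f1, f2⟩ := d4 (by omega) j hL hj2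
        constructor
        · rw [ha_hi _ hjl]; exact f1
        · rw [hb, if_neg (by omega), if_neg (by omega), if_neg (by omega), if_neg]
          · exact f2
          · rintro ⟨h, h'⟩
            have := e3 j le_rfl hj2
            rw [h, h'] at this
            simp at this
      · intro hL1 _
        exfalso
        have := ((Lfun_lt i (x + 1) 2 h3).1 (by omega)).2 l (by omega) (by omega)
        rw [hbits] at this
        simp at this
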